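/- Let G be a finite group whose commutator subgroup ⁅G,G⁆ is contained in the center Z(G), and let n ≥ 1 be the exponent of ⁅G,G⁆. Then for every irreducible finite-dimensional complex representation V of G, every irreducible constituent of the tensor power V^{⊗n} is one-dimensional. -/

import Mathlib

open scoped TensorProduct

/-- The `n`-fold tensor power of a representation, with the diagonal `G`-action. -/
noncomputable def tensorPowerRep {k G V : Type*} [CommSemiring k] [Monoid G]
    [AddCommMonoid V] [Module k V] (ρ : Representation k G V) (n : ℕ) :
    Representation k G (⨂[k] _ : Fin n, V) :=
  PiTensorProduct.mapMonoidHom.comp (Pi.monoidHom fun _ : Fin n => ρ)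

/-! Each `z ∈ ⁅G, G⁆` is central, so by Schur's lemma it acts on `V` as a scalar `c`, hence on
`V^{⊗n}` as `c ^ n`, and `c ^ n = 1` because `z ^ n = 1`. So `⁅G, G⁆` acts trivially on `V^{⊗n}`
and on each of its constituents, which are therefore irreducible representations of the abelian
group `G ⧸ ⁅G, G⁆`. -/

open Representation

theorem tensorPowerRep_apply_of_eq_smul_one {k G V : Type*} [CommSemiring k] [Monoid G]
    [AddCommMonoid V] [Module k V] {ρ : Representation k G V} {g : G} {c : k}
    (hg : ρ g = c • 1) (n : ℕ) : tensorPowerRep ρ n g = c ^ n • 1 :=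
  calc tensorPowerRep ρ n g = PiTensorProduct.mapMultilinear k _ _ fun _ => ρ g := rfl
    _ = PiTensorProduct.mapMultilinear k _ _ fun _ => c • 1 := by rw [hg]
    _ = (∏ _ : Fin n, c) • PiTensorProduct.map fun _ => 1 := MultilinearMap.map_smul_univ _ _ _
    _ = c ^ n • 1 := by rw [Fin.prod_const, PiTensorProduct.map_one]

theorem ker_le_ker_of_injective_intertwiningMap {k G V W : Type*} [Semiring k] [Group G]
    [AddCommMonoid V] [Module k V] [AddCommMonoid W] [Module k W]
    {ρ : Representation k G V} {σ : Representation k G W}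
    (f : IntertwiningMap σ ρ) (hf : Function.Injective f) :
    MonoidHom.ker ρ ≤ MonoidHom.ker σ := by
  intro g (hg : ρ g = 1)
  ext w
  apply hf
  rw [f.isIntertwining, hg, Module.End.one_apply, Module.End.one_apply]

section Irreducible

variable {k V : Type*} [Field k] [AddCommGroup V] [Module k V]

theorem nontrivial_of_isIrreducible {G : Type*} [Monoid G] (ρ : Representation k G V)
    [ρ.IsIrreducible] : Nontrivial V :=
  IsSimpleModule.nontrivial (MonoidAlgebra k G) ρ.asModule

theorem isIrreducible_of_comp {G H : Type*} [Monoid G] [Monoid H] (ρ : Representation k H V)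
    (φ : G →* H) [IsIrreducible (ρ.comp φ)] : ρ.IsIrreducible where
  exists_pair_ne := by
    have := nontrivial_of_isIrreducible (ρ.comp φ)
    exact ⟨⊥, ⊤, fun h => bot_ne_top (α := Submodule k V)
      (congrArg Subrepresentation.toSubmodule h)⟩
  eq_bot_or_eq_top p := by
    let q : Subrepresentation (ρ.comp φ) := ⟨p.toSubmodule, fun g => p.apply_mem_toSubmodule (φ g)⟩
    exact (eq_bot_or_eq_top q).imp
      (fun h => Subrepresentation.ext (congrArg (fun r => r.toSubmodule) h))
      (fun h => Subrepresentation.ext (congrArg (fun r => r.toSubmodule) h))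

variable [FiniteDimensional k V] [IsAlgClosed k]

theorem exists_apply_eq_smul_one_of_mem_center {G : Type*} [Monoid G] (ρ : Representation k G V)
    [ρ.IsIrreducible] {z : G} (hz : z ∈ Submonoid.center G) : ∃ c : k, ρ z = c • 1 := by
  obtain ⟨c, hc⟩ := IsIrreducible.algebraMap_intertwiningMap_bijective_of_isAlgClosed.surjective
    (IntertwiningMap.centralMul ρ z hz)
  exact ⟨c, (congrArg IntertwiningMap.toLinearMap hc).symm⟩

theorem finrank_eq_one_of_commutator_le_ker {G : Type*} [Group G] (ρ : Representation k G V)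
    [ρ.IsIrreducible] (h : commutator G ≤ MonoidHom.ker ρ) : Module.finrank k V = 1 := by
  let ρab : Representation k (Abelianization G) V := QuotientGroup.lift (commutator G) ρ h
  have : IsIrreducible (ρab.comp Abelianization.of) := ‹ρ.IsIrreducible›
  have : ρab.IsIrreducible := isIrreducible_of_comp ρab Abelianization.of
  exact IsIrreducible.finrank_eq_one_of_isMulCommutative ρab

theorem tensorPowerRep_apply_eq_one_of_mem_center {G : Type*} [Monoid G]
    (ρ : Representation k G V) [ρ.IsIrreducible] {z : G} (hz : z ∈ Submonoid.center G)
    {n : ℕ} (hzn : z ^ n = 1) : tensorPowerRep ρ n z = 1 := by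
  have := nontrivial_of_isIrreducible ρ
  obtain ⟨c, hc⟩ := exists_apply_eq_smul_one_of_mem_center ρ hz
  have hcn : c ^ n = 1 := by
    apply smul_left_injective k (one_ne_zero (α := Module.End k V))
    calc c ^ n • (1 : Module.End k V) = ρ z ^ n := by rw [hc, smul_pow, one_pow]
      _ = (1 : k) • 1 := by rw [← map_pow, hzn, map_one, one_smul]
  rw [tensorPowerRep_apply_of_eq_smul_one hc, hcn, one_smul]

end Irreducible

theorem tensorPower_exponent_commutator_linearizes_general {k G V W : Type*} [Field k]
    [IsAlgClosed k] [Group G] (hclass2 : commutator G ≤ Subgroup.center G)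
    {n : ℕ} (hn : Monoid.exponent ↥(commutator G) ∣ n)
    [AddCommGroup V] [Module k V] [FiniteDimensional k V] [AddCommGroup W] [Module k W]
    {ρ : Representation k G V} (hρ : ρ.IsIrreducible)
    {σ : Representation k G W} (hσ : σ.IsIrreducible)
    (f : IntertwiningMap σ (tensorPowerRep ρ n)) (hf : f ≠ 0) : Module.finrank k W = 1 := by
  have f_injective : Function.Injective f := (IsIrreducible.injective_or_eq_zero f).resolve_right hf
  have : FiniteDimensional k W := Module.Finite.of_injective f.toLinearMap f_injective
  have commutator_le_ker : commutator G ≤ MonoidHom.ker (tensorPowerRep ρ n) := fun z hz =>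
    have hzn : z ^ n = 1 :=
      congrArg Subtype.val (Monoid.exponent_dvd_iff_forall_pow_eq_one.1 hn ⟨z, hz⟩)
    tensorPowerRep_apply_eq_one_of_mem_center ρ (hclass2 hz) hzn
  exact finrank_eq_one_of_commutator_le_ker σ
    (commutator_le_ker.trans (ker_le_ker_of_injective_intertwiningMap f f_injective))

/-- If `G` is a finite group with `⁅G,G⁆ ≤ Z(G)` and `n ≥ 1` is the exponent of `⁅G,G⁆`,
then for every irreducible finite-dimensional complex representation `V` of `G`, every
irreducible constituent of `V^{⊗ n}` is one-dimensional. -/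
theorem tensorPower_exponent_commutator_linearizes
    (G : Type) [Group G] [Finite G]
    (hclass2 : commutator G ≤ Subgroup.center G)
    (n : ℕ) (hn : n = Monoid.exponent ↥(commutator G)) (hn1 : 1 ≤ n)
    (V : Type) [AddCommGroup V] [Module ℂ V] [FiniteDimensional ℂ V]
    (ρ : Representation ℂ G V)
    (hV : IsSimpleModule (MonoidAlgebra ℂ G) ρ.asModule)
    (W : Type) [AddCommGroup W] [Module ℂ W] (σ : Representation ℂ G W)
    (hW : IsSimpleModule (MonoidAlgebra ℂ G) σ.asModule)
    (f : W →ₗ[ℂ] (⨂[ℂ] _ : Fin n, V)) (hf : f ≠ 0)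
    (hequiv : ∀ (g : G) (w : W), f (σ g w) = tensorPowerRep ρ n g (f w)) :
    Module.finrank ℂ W = 1 :=
  tensorPower_exponent_commutator_linearizes_general hclass2 hn.symm.dvd
    (ρ.irreducible_iff_isSimpleModule_asModule.2 hV)
    (σ.irreducible_iff_isSimpleModule_asModule.2 hW)
    ⟨f, fun g => LinearMap.ext (hequiv g)⟩ fun h => hf (congrArg IntertwiningMap.toLinearMap h)
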